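/- Let h₁ = [[a₁, b₁], [b₁, −a₁]] and h₂ = [[a₂, b₂], [b₂, −a₂]] be symmetric traceless 2×2 real matrices. Then their harmonic product h₁∗h₂, defined as the fourth-order tensor (h₁⊙h₂) i j k l − ¼(Σₚq h₁ p q · h₂ p q)·(δ⊙δ) i j k l (where ⊙ denotes total symmetrization), is a 2D harmonic fourth-order tensor whose two determining components are (h₁∗h₂) 1 1 1 1 = ½(a₁·a₂ − b₁·b₂) and (h₁∗h₂) 1 1 1 2 = ½(a₁·b₂ + a₂·b₁); equivalently, (h₁∗h₂) 1 1 1 1 + i·(h₁∗h₂) 1 1 1 2 = ½(a₁ + i·b₁)(a₂ + i·b₂) in ℂ, so harmonic product corresponds to complex multiplication. -/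

import Mathlib

open Finset

noncomputable section

/-- A fourth-order tensor on `ℝ²`. -/
abbrev Tens4 := Fin 2 → Fin 2 → Fin 2 → Fin 2 → ℝ

/-- Kronecker delta on `Fin 2`. -/
def kdelta (i j : Fin 2) : ℝ := if i = j then 1 else 0

/-- The isotropic fourth-order tensor `J`. -/
def Jten (i j k l : Fin 2) : ℝ :=
  (kdelta i k * kdelta j l + kdelta i l * kdelta j k) / 2 - kdelta i j * kdelta k l / 2

/-- A 2D elasticity tensor: minor and major index symmetries. -/
def IsElas (C : Tens4) : Prop :=
  (∀ i j k l, C i j k l = C j i k l) ∧ (∀ i j k l, C i j k l = C i j l k) ∧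
    (∀ i j k l, C i j k l = C k l i j)

/-- Dilatation tensor `d(C)ᵢⱼ = Σₖ C k k i j`. -/
def dil (C : Tens4) (i j : Fin 2) : ℝ := ∑ k, C k k i j

/-- Voigt tensor `v(C)ᵢⱼ = Σₖ C k i k j`. -/
def voigt (C : Tens4) (i j : Fin 2) : ℝ := ∑ k, C k i k j

/-- Shear modulus `μ(C)`. -/
def muC (C : Tens4) : ℝ := (2 * ∑ i, voigt C i i - ∑ i, dil C i i) / 8

/-- 2D bulk modulus `κ(C)`. -/
def kappaC (C : Tens4) : ℝ := (∑ i, dil C i i) / 4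

/-- Deviatoric part `d'(C)` of the dilatation tensor. -/
def devC (C : Tens4) (i j : Fin 2) : ℝ := dil C i j - (∑ k, dil C k k) / 2 * kdelta i j

/-- Harmonic (fourth-order) part `H(C)` of the elasticity tensor. -/
def harmC (C : Tens4) (i j k l : Fin 2) : ℝ :=
  C i j k l - 2 * muC C * Jten i j k l - kappaC C * kdelta i j * kdelta k l
    - (kdelta i j * devC C k l + devC C i j * kdelta k l) / 2

/-- A 2D harmonic fourth-order tensor: totally symmetric (invariant under all
permutations of its four indices) and traceless. -/
def IsHarmonic (H : Tens4) : Prop :=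
  (∀ (σ : Equiv.Perm (Fin 4)) (v : Fin 4 → Fin 2),
      H (v (σ 0)) (v (σ 1)) (v (σ 2)) (v (σ 3)) = H (v 0) (v 1) (v 2) (v 3)) ∧
    (∀ i j : Fin 2, ∑ k, H k k i j = 0)

/-- Total symmetrization of a fourth-order tensor: the average over all 24
permutations of the four indices. -/
def sym4 (T : Tens4) (i j k l : Fin 2) : ℝ :=
  (∑ σ : Equiv.Perm (Fin 4),
    T (![i, j, k, l] (σ 0)) (![i, j, k, l] (σ 1)) (![i, j, k, l] (σ 2))
      (![i, j, k, l] (σ 3))) / 24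

/-!
A complex number `z` encodes the symmetric traceless matrix with quadratic form
`re (conj z * w ^ 2)` and the harmonic fourth-order tensor with quartic form
`re (conj z * w ^ 4)`. By `re u * re v = re (u * v) / 2 + re (u * conj v) / 2`, the product of the
quadratic forms of `z₁` and `z₂` is the quartic form of `z₁ * z₂ / 2` plus a multiple of
`‖w‖ ^ 4`. The latter is the quartic form of the term in `δ ⊙ δ` which the harmonic product removes.
-/

open Complex (basisOneI)
open scoped ComplexConjugate

/-- The action of `S₄` on fourth-order tensors by permutation of the index slots. -/
def permuteIndices (σ : Equiv.Perm (Fin 4)) (T : Tens4) : Tens4 := fun i j k l =>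
  T (![i, j, k, l] (σ 0)) (![i, j, k, l] (σ 1)) (![i, j, k, l] (σ 2)) (![i, j, k, l] (σ 3))

lemma permuteIndices_permuteIndices (σ τ : Equiv.Perm (Fin 4)) (T : Tens4) :
    permuteIndices σ (permuteIndices τ T) = permuteIndices (σ * τ) T := by
  funext i j k l
  have eta (v : Fin 4 → Fin 2) : ![v 0, v 1, v 2, v 3] = v := FinVec.etaExpand_eq v
  simp only [permuteIndices, eta fun m => ![i, j, k, l] (σ m), Equiv.Perm.mul_apply]

lemma sym4_eq_smul_sum_permuteIndices (T : Tens4) :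
    sym4 T = (24⁻¹ : ℝ) • ∑ σ : Equiv.Perm (Fin 4), permuteIndices σ T := by
  funext i j k l
  simp only [sym4, permuteIndices, Pi.smul_apply, Finset.sum_apply, smul_eq_mul, div_eq_inv_mul]

lemma sym4_add (S T : Tens4) : sym4 (S + T) = sym4 S + sym4 T := by
  funext i j k l
  simp only [sym4, Pi.add_apply, sum_add_distrib, add_div]

lemma sym4_smul (c : ℝ) (T : Tens4) : sym4 (c • T) = c • sym4 T := by
  funext i j k l
  simp only [sym4, Pi.smul_apply, smul_eq_mul, ← mul_sum, mul_div_assoc]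

lemma sym4_permuteIndices (τ : Equiv.Perm (Fin 4)) (T : Tens4) :
    sym4 (permuteIndices τ T) = sym4 T := by
  simp only [sym4_eq_smul_sum_permuteIndices, permuteIndices_permuteIndices]
  congr 1
  exact Equiv.sum_comp (Equiv.mulRight τ) fun σ => permuteIndices σ T

lemma sym4_eq_self {T : Tens4} (hT : ∀ σ, permuteIndices σ T = T) : sym4 T = T := by
  have card_perm : Fintype.card (Equiv.Perm (Fin 4)) = 24 := by
    rw [Fintype.card_perm, Fintype.card_fin]
    rfl
  simp only [sym4_eq_smul_sum_permuteIndices, hT, sum_const, card_univ, card_perm]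
  module

/-- The symmetric traceless matrix encoded by `z`, as the coefficients of the harmonic quadratic
form `w ↦ re (conj z * w ^ 2)` in the basis `1, I`. -/
def harmonicMatrix (z : ℂ) : Matrix (Fin 2) (Fin 2) ℝ := Matrix.of fun i j =>
  (conj z * (basisOneI i * basisOneI j)).re

lemma harmonicMatrix_mk (a b : ℝ) : harmonicMatrix ⟨a, b⟩ = !![a, b; b, -a] := by
  ext i j
  fin_cases i <;> fin_cases j <;> simp [harmonicMatrix]

lemma sum_harmonicMatrix_mul_harmonicMatrix (z w : ℂ) :
    ∑ p, ∑ q, harmonicMatrix z p q * harmonicMatrix w p q = 2 * (conj z * w).re := by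
  obtain ⟨a, b⟩ := z
  obtain ⟨c, d⟩ := w
  simp only [harmonicMatrix_mk, Fin.sum_univ_two, Matrix.of_apply, Matrix.cons_val_zero,
    Matrix.cons_val_one, Matrix.cons_val_fin_one, Complex.mul_re, Complex.conj_re, Complex.conj_im]
  ring

/-- The harmonic tensor encoded by `z`, as the coefficients of the harmonic quartic form
`w ↦ re (conj z * w ^ 4)` in the basis `1, I`. -/
def harmonicTensor (z : ℂ) : Tens4 := fun i j k l =>
  (conj z * (basisOneI i * basisOneI j * basisOneI k * basisOneI l)).re

lemma harmonicTensor_apply_zero_zero_zero_zero (z : ℂ) : harmonicTensor z 0 0 0 0 = z.re := by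
  simp [harmonicTensor]

lemma harmonicTensor_apply_zero_zero_zero_one (z : ℂ) : harmonicTensor z 0 0 0 1 = z.im := by
  simp [harmonicTensor]

lemma harmonicTensor_apply_eq_re_prod (z : ℂ) (v : Fin 4 → Fin 2) :
    harmonicTensor z (v 0) (v 1) (v 2) (v 3) = (conj z * ∏ m, basisOneI (v m)).re := by
  rw [Fin.prod_univ_four, harmonicTensor]

lemma sum_basisOneI_mul_self : ∑ k, basisOneI k * basisOneI k = 0 := by
  simp

lemma isHarmonic_harmonicTensor (z : ℂ) : IsHarmonic (harmonicTensor z) := by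
  refine ⟨fun σ v => ?_, fun i j => ?_⟩
  · rw [harmonicTensor_apply_eq_re_prod z fun m => v (σ m), harmonicTensor_apply_eq_re_prod,
      Equiv.prod_comp σ fun m => basisOneI (v m)]
  · simp only [harmonicTensor, ← Complex.re_sum, ← mul_sum, ← sum_mul, sum_basisOneI_mul_self,
      zero_mul, mul_zero, Complex.zero_re]

lemma sym4_harmonicTensor (z : ℂ) : sym4 (harmonicTensor z) = harmonicTensor z :=
  sym4_eq_self fun σ => by
    funext i j k l
    exact (isHarmonic_harmonicTensor z).1 σ ![i, j, k, l]

/-- The tensor product of two second-order tensors, whose symmetrization is written `h₁ ⊙ h₂`. -/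
def outerProduct (h₁ h₂ : Fin 2 → Fin 2 → ℝ) : Tens4 := fun i j k l => h₁ i j * h₂ k l

/-- The non-harmonic part of a product of two harmonic matrices; its quartic form is
`w ↦ re (c * w ^ 2 * conj w ^ 2) = re c * ‖w‖ ^ 4`. -/
def mixedTensor (c : ℂ) : Tens4 := fun i j k l =>
  (c * (basisOneI i * basisOneI j * conj (basisOneI k * basisOneI l))).re

lemma basisOneI_mul_conj_add (i j : Fin 2) :
    basisOneI i * conj (basisOneI j) + basisOneI j * conj (basisOneI i) = 2 * (kdelta i j : ℂ) := by
  fin_cases i <;> fin_cases j <;> simp [kdelta, one_add_one_eq_two]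

-- With `e = basisOneI`, averaging over the swaps of slots 0, 2 and of slots 1, 3 replaces
-- `eᵢ * conj eₖ` and `eⱼ * conj eₗ` by their real parts `δᵢₖ` and `δⱼₗ`.
lemma mixedTensor_add_permuteIndices (c : ℂ) :
    mixedTensor c + permuteIndices (Equiv.swap 0 2) (mixedTensor c)
        + permuteIndices (Equiv.swap 1 3) (mixedTensor c)
        + permuteIndices (Equiv.swap 0 2 * Equiv.swap 1 3) (mixedTensor c)
      = (4 * c.re) • permuteIndices (Equiv.swap 1 2) (outerProduct kdelta kdelta) := by
  funext i j k l
  change mixedTensor c i j k l + mixedTensor c k j i l + mixedTensor c i l k j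
    + mixedTensor c k l i j = 4 * c.re * (kdelta i k * kdelta j l)
  calc
    _ = (c * ((basisOneI i * conj (basisOneI k) + basisOneI k * conj (basisOneI i)) *
            (basisOneI j * conj (basisOneI l) + basisOneI l * conj (basisOneI j)))).re := by
      simp only [mixedTensor, ← Complex.add_re, map_mul]
      ring_nf
    _ = (c * ((4 * (kdelta i k * kdelta j l) : ℝ) : ℂ)).re := by
      rw [basisOneI_mul_conj_add, basisOneI_mul_conj_add]
      push_cast
      ring_nf
    _ = 4 * c.re * (kdelta i k * kdelta j l) := by
      rw [Complex.re_mul_ofReal]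
      ring

lemma sym4_mixedTensor (c : ℂ) :
    sym4 (mixedTensor c) = c.re • sym4 (outerProduct kdelta kdelta) := by
  have h := congrArg sym4 (mixedTensor_add_permuteIndices c)
  simp only [sym4_add, sym4_smul, sym4_permuteIndices] at h
  linear_combination (norm := module) (4⁻¹ : ℝ) • h

lemma outerProduct_harmonicMatrix (z w : ℂ) :
    outerProduct (harmonicMatrix z) (harmonicMatrix w) =
      harmonicTensor (z * w / 2) + mixedTensor (conj z * w / 2) := by
  have re_mul_re (u v : ℂ) : u.re * v.re = (u * v / 2).re + (u * conj v / 2).re := by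
    simp only [Complex.mul_re, Complex.div_ofNat_re, Complex.conj_re, Complex.conj_im]
    ring
  funext i j k l
  simp only [outerProduct, harmonicMatrix, Matrix.of_apply, harmonicTensor, mixedTensor,
    Pi.add_apply, re_mul_re, map_mul, map_div₀, map_ofNat, Complex.conj_conj]
  ring_nf

/-- The harmonic product `h₁ ∗ h₂`, the traceless part of `h₁ ⊙ h₂` when `h₁` and `h₂` are
symmetric and traceless. -/
def harmonicProduct (h₁ h₂ : Fin 2 → Fin 2 → ℝ) : Tens4 := fun i j k l =>
  sym4 (outerProduct h₁ h₂) i j k l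
    - (∑ p, ∑ q, h₁ p q * h₂ p q) / 4 * sym4 (outerProduct kdelta kdelta) i j k l

theorem harmonicProduct_harmonicMatrix (z w : ℂ) :
    harmonicProduct (harmonicMatrix z) (harmonicMatrix w) = harmonicTensor (z * w / 2) := by
  funext i j k l
  unfold harmonicProduct
  rw [outerProduct_harmonicMatrix, sym4_add, sym4_harmonicTensor, sym4_mixedTensor,
    sum_harmonicMatrix_mul_harmonicMatrix, Complex.div_ofNat_re (conj z * w)]
  simp only [Pi.add_apply, Pi.smul_apply, smul_eq_mul]
  ring

/-- The harmonic product of two symmetric traceless `2×2` matrices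
is a 2D harmonic fourth-order tensor whose two determining components are given by
complex multiplication: `(h₁∗h₂)₁₁₁₁ + i (h₁∗h₂)₁₁₁₂ = ½(a₁+ib₁)(a₂+ib₂)`. -/
theorem harmonic_product_is_complex_multiplication (a₁ b₁ a₂ b₂ : ℝ) :
    let h₁ : Matrix (Fin 2) (Fin 2) ℝ := !![a₁, b₁; b₁, -a₁]
    let h₂ : Matrix (Fin 2) (Fin 2) ℝ := !![a₂, b₂; b₂, -a₂]
    let P : Tens4 := fun i j k l =>
      sym4 (fun i j k l => h₁ i j * h₂ k l) i j k l
        - (∑ p, ∑ q, h₁ p q * h₂ p q) / 4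
          * sym4 (fun i j k l => kdelta i j * kdelta k l) i j k l
    IsHarmonic P ∧ P 0 0 0 0 = (a₁ * a₂ - b₁ * b₂) / 2 ∧
      P 0 0 0 1 = (a₁ * b₂ + a₂ * b₁) / 2 ∧
      (P 0 0 0 0 : ℂ) + Complex.I * (P 0 0 0 1 : ℂ)
        = (a₁ + Complex.I * b₁) * (a₂ + Complex.I * b₂) / 2 := by
  intro h₁ h₂ P
  set z : ℂ := ⟨a₁, b₁⟩ * ⟨a₂, b₂⟩ / 2 with hz
  have hP : P = harmonicTensor z := by
    rw [hz, ← harmonicProduct_harmonicMatrix, harmonicMatrix_mk, harmonicMatrix_mk]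
    rfl
  have h0 : P 0 0 0 0 = z.re := by rw [hP, harmonicTensor_apply_zero_zero_zero_zero]
  have h1 : P 0 0 0 1 = z.im := by rw [hP, harmonicTensor_apply_zero_zero_zero_one]
  refine ⟨hP ▸ isHarmonic_harmonicTensor z, ?_, ?_, ?_⟩
  · simp [h0, hz]
  · simp [h1, hz, mul_comm a₂]
  · rw [h0, h1, mul_comm Complex.I, Complex.re_add_im, hz, Complex.mk_eq_add_mul_I,
      Complex.mk_eq_add_mul_I, mul_comm Complex.I, mul_comm Complex.I]
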